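/- Let G be a hyperbolic group which is not a torsion group (G contains an element of infinite order) and which is not elementary, i.e. not virtually cyclic. Then the center Z(G) of G is finite. -/

import Mathlib

/-- The word metric on a group `G` with respect to a generating set `S`:
`wordDist S g h` is the least length of a word in `S ∪ S⁻¹` representing `g⁻¹ * h`. -/
noncomputable def wordDist {G : Type*} [Group G] (S : Set G) (g h : G) : ℝ :=
  sInf {r : ℝ | ∃ l : List G, (∀ x ∈ l, x ∈ S ∨ x⁻¹ ∈ S) ∧ l.prod = g⁻¹ * h ∧ r = l.length}

/-- The Gromov product `(x|y)_w` with respect to the word metric for `S`. -/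
noncomputable def gromovProd {G : Type*} [Group G] (S : Set G) (w x y : G) : ℝ :=
  (wordDist S x w + wordDist S y w - wordDist S x y) / 2

/-- A group is (Gromov) hyperbolic if it admits a finite generating set `S` such that
the word metric `d_S` satisfies the Gromov product four-point condition for some `δ ≥ 0`. -/
def IsHyperbolicGroup (G : Type*) [Group G] : Prop :=
  ∃ S : Set G, S.Finite ∧ Subgroup.closure S = ⊤ ∧
    ∃ δ : ℝ, 0 ≤ δ ∧ ∀ w x y z : G,
      gromovProd S w x y ≥ min (gromovProd S w x z) (gromovProd S w y z) - δ

/-- natural-number word length -/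
noncomputable def wlen {G : Type*} [Group G] (S : Set G) (g : G) : ℕ :=
  sInf {n : ℕ | ∃ l : List G, (∀ x ∈ l, x ∈ S ∨ x⁻¹ ∈ S) ∧ l.prod = g ∧ l.length = n}

lemma wlen_le {G : Type*} [Group G] (S : Set G) (l : List G)
    (hl : ∀ x ∈ l, x ∈ S ∨ x⁻¹ ∈ S) : wlen S l.prod ≤ l.length :=
  Nat.sInf_le ⟨l, hl, rfl, rfl⟩

lemma wlen_spec {G : Type*} [Group G] (S : Set G) (hS : Subgroup.closure S = ⊤) (g : G) :
    ∃ l : List G, (∀ x ∈ l, x ∈ S ∨ x⁻¹ ∈ S) ∧ l.prod = g ∧ l.length = wlen S g := by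
  have hg : g ∈ Subgroup.closure S := by rw [hS]; trivial
  rw [← Subgroup.mem_toSubmonoid, Subgroup.closure_toSubmonoid] at hg
  obtain ⟨l, h1, h2⟩ := Submonoid.exists_list_of_mem_closure hg
  exact Nat.sInf_mem (s := {n : ℕ | ∃ l : List G, (∀ x ∈ l, x ∈ S ∨ x⁻¹ ∈ S) ∧ l.prod = g ∧
    l.length = n}) ⟨_, l, h1, h2, rfl⟩

lemma wlen_inv_le {G : Type*} [Group G] (S : Set G) (hS : Subgroup.closure S = ⊤) (g : G) :
    wlen S g⁻¹ ≤ wlen S g := by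
  obtain ⟨l, h1, h2, h3⟩ := wlen_spec S hS g
  rw [← h3, ← h2, List.prod_inv_reverse]
  refine (wlen_le S _ ?_).trans (by simp)
  intro x hx
  simp only [List.mem_reverse, List.mem_map] at hx
  obtain ⟨a, ha, rfl⟩ := hx
  rw [inv_inv]
  exact (h1 a ha).symm

lemma wlen_inv {G : Type*} [Group G] (S : Set G) (hS : Subgroup.closure S = ⊤) (g : G) :
    wlen S g⁻¹ = wlen S g := by
  refine le_antisymm (wlen_inv_le S hS g) ?_
  simpa using wlen_inv_le S hS g⁻¹

lemma wordDist_eq {G : Type*} [Group G] (S : Set G) (hS : Subgroup.closure S = ⊤) (g h : G) :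
    wordDist S g h = wlen S (g⁻¹ * h) := by
  unfold wordDist
  obtain ⟨l, h1, h2, h3⟩ := wlen_spec S hS (g⁻¹ * h)
  apply le_antisymm
  · refine csInf_le ⟨0, ?_⟩ ⟨l, h1, h2, by rw [h3]⟩
    rintro r ⟨l, -, -, rfl⟩
    positivity
  · refine le_csInf ⟨_, l, h1, h2, rfl⟩ ?_
    rintro r ⟨l', h1', h2', rfl⟩
    rw [← h2']
    exact_mod_cast wlen_le S l' h1'

lemma ball_finite {G : Type*} [Group G] (S : Set G) (hf : S.Finite)
    (hS : Subgroup.closure S = ⊤) (n : ℕ) : {g : G | wlen S g ≤ n}.Finite := by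
  have hT : {x : G | x ∈ S ∨ x⁻¹ ∈ S}.Finite := by
    have : {x : G | x ∈ S ∨ x⁻¹ ∈ S} = S ∪ S⁻¹ := by ext; simp
    rw [this]
    exact hf.union hf.inv
  have : Finite {x : G | x ∈ S ∨ x⁻¹ ∈ S} := hT
  have h := (List.finite_length_le {x : G | x ∈ S ∨ x⁻¹ ∈ S} n).image
    (fun l => (l.map Subtype.val).prod)
  refine h.subset ?_
  intro g hg
  obtain ⟨l, h1, h2, h3⟩ := wlen_spec S hS g
  refine ⟨l.attach.map (fun x => ⟨x.1, h1 x.1 x.2⟩), ?_, ?_⟩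
  · simpa [h3] using hg
  · simp [Function.comp_def, h2]

/-- the four point condition -/
lemma four_pt {G : Type*} [Group G] (S : Set G) (hS : Subgroup.closure S = ⊤) (δ : ℝ)
    (hd : ∀ w x y z : G,
      gromovProd S w x y ≥ min (gromovProd S w x z) (gromovProd S w y z) - δ) (x y z w : G) :
    (wlen S (x⁻¹ * y) : ℝ) + wlen S (z⁻¹ * w) ≤
        wlen S (y⁻¹ * w) + wlen S (x⁻¹ * z) + 2 * δ ∨
    (wlen S (x⁻¹ * y) : ℝ) + wlen S (z⁻¹ * w) ≤
        wlen S (x⁻¹ * w) + wlen S (y⁻¹ * z) + 2 * δ := by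
  have h := hd w x y z
  simp only [gromovProd, wordDist_eq S hS] at h
  rcases min_cases ((wlen S (x⁻¹ * w) + wlen S (z⁻¹ * w) - wlen S (x⁻¹ * z) : ℝ) / 2)
    ((wlen S (y⁻¹ * w) + wlen S (z⁻¹ * w) - wlen S (y⁻¹ * z)) / 2) with ⟨h1, _⟩ | ⟨h1, _⟩
  · left; rw [h1] at h; linarith
  · right; rw [h1] at h; linarith

lemma key_bound {G : Type*} [Group G] (S : Set G) (hS : Subgroup.closure S = ⊤) (δ : ℝ)
    (hδ : 0 ≤ δ)
    (hd : ∀ w x y z : G,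
      gromovProd S w x y ≥ min (gromovProd S w x z) (gromovProd S w y z) - δ)
    (z h m : G) (hc : z * h = h * z) (M : ℕ) (hM : wlen S h ≤ M)
    (hz : 2 * M ≤ wlen S z) (hm : wlen S m ≤ M) (hm' : wlen S (m⁻¹ * z) + M ≤ wlen S z)
    (h1 : wlen S z ≤ wlen S (z * h)) (h2 : wlen S z ≤ wlen S (z * h⁻¹)) :
    (wlen S (m⁻¹ * h * m) : ℝ) ≤ 10 * δ := by
  have c' : h⁻¹ * z = z * h⁻¹ := by
    rw [inv_mul_eq_iff_eq_mul, ← mul_assoc, ← hc, mul_inv_cancel_right]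
  have R0 : (0:ℝ) ≤ M := by positivity
  have rM : (wlen S h : ℝ) ≤ M := by exact_mod_cast hM
  have rz : 2 * (M:ℝ) ≤ wlen S z := by exact_mod_cast hz
  have rm : (wlen S m : ℝ) ≤ M := by exact_mod_cast hm
  have rm' : (wlen S (m⁻¹ * z) : ℝ) + M ≤ wlen S z := by exact_mod_cast hm'
  have r1 : (wlen S z : ℝ) ≤ wlen S (z * h) := by exact_mod_cast h1
  have r2 : (wlen S z : ℝ) ≤ wlen S (z * h⁻¹) := by exact_mod_cast h2
  have im : wlen S m⁻¹ = wlen S m := wlen_inv S hS m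
  have ih : wlen S h⁻¹ = wlen S h := wlen_inv S hS h
  have iz : wlen S z⁻¹ = wlen S z := wlen_inv S hS z
  have izh : wlen S (z⁻¹ * h) = wlen S (z * h⁻¹) := by
    rw [← wlen_inv S hS, mul_inv_rev, inv_inv, c']
  have izh2 : wlen S ((z * h)⁻¹) = wlen S (z * h) := wlen_inv S hS _
  have imh : wlen S (m⁻¹ * h⁻¹) = wlen S (h * m) := by
    rw [← wlen_inv S hS (h * m), mul_inv_rev]
  -- A
  have A := four_pt S hS δ hd 1 (z * h) h z
  have e1 : (z * h)⁻¹ * z = h⁻¹ := by group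
  have e2 : (z * h)⁻¹ * h = z⁻¹ := by rw [hc]; group
  simp only [e1, e2, inv_one, one_mul, ih, iz, c'] at A
  -- B
  have B := four_pt S hS δ hd m (z * h) 1 z
  simp only [e1, inv_one, one_mul, mul_one, ih, im, izh2] at B
  -- C
  have C := four_pt S hS δ hd m h⁻¹ 1 z
  simp only [inv_inv, inv_one, one_mul, mul_one, im, imh, ← hc] at C
  -- D
  have D := four_pt S hS δ hd m (h * m) 1 (z * h)
  have e3 : (h * m)⁻¹ * (z * h) = m⁻¹ * z := by rw [hc]; group
  have e4 : wlen S (h * m)⁻¹ = wlen S (h * m) := wlen_inv S hS _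
  simp only [e3, e4, inv_one, one_mul, mul_one, im, ← mul_assoc] at D
  simp only [← mul_assoc] at A B C D
  have A1 : (wlen S (z * h) : ℝ) ≤ wlen S z + 2 * δ := by
    rcases A with A | A <;> linarith
  have B1 : (wlen S (m⁻¹ * z * h) : ℝ) ≤ wlen S z - M + 4 * δ := by
    rcases B with B | B <;> linarith
  have C1 : (wlen S (h * m) : ℝ) ≤ M + 4 * δ := by
    rcases C with C | C <;> linarith
  rcases D with D | D <;> linarith

lemma coset_bound {G : Type*} [Group G] (S : Set G) (hf : S.Finite)
    (hS : Subgroup.closure S = ⊤) (δ : ℝ) (hδ : 0 ≤ δ)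
    (hd : ∀ w x y z : G,
      gromovProd S w x y ≥ min (gromovProd S w x z) (gromovProd S w y z) - δ)
    (g : G) (hg : ∀ n : ℤ, n ≠ 0 → g ^ n ≠ 1) :
    ∃ C : ℕ, ∀ z : G, z * g = g * z → ∃ k : ℤ, wlen S (z * g ^ k) ≤ C := by
  classical
  obtain ⟨K, hK⟩ := exists_nat_ge (10 * δ)
  set B := (ball_finite S hf hS K).toFinset with hB
  set M := (Finset.range (B.card + 1)).sup (fun i => wlen S (g ^ i)) with hMdef
  refine ⟨2 * M, fun z0 hz0 => ?_⟩
  obtain ⟨k, hk⟩ : ∃ k : ℤ, ∀ j : ℤ, wlen S (z0 * g ^ k) ≤ wlen S (z0 * g ^ j) := by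
    obtain ⟨k, hk⟩ := Nat.sInf_mem (Set.range_nonempty (fun j : ℤ => wlen S (z0 * g ^ j)))
    refine ⟨k, fun j => ?_⟩
    simp only at hk
    rw [hk]
    exact Nat.sInf_le ⟨j, rfl⟩
  refine ⟨k, ?_⟩
  by_contra hcon
  push Not at hcon
  set z := z0 * g ^ k with hzdef
  have hzc : Commute z g := Commute.mul_left hz0 ((Commute.refl g).zpow_left k)
  obtain ⟨l, l1, l2, l3⟩ := wlen_spec S hS z
  set m := (l.take M).prod with hm
  have hmz : m⁻¹ * z = (l.drop M).prod := by
    rw [inv_mul_eq_iff_eq_mul, hm, List.prod_take_mul_prod_drop, l2]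
  have hm1 : wlen S m ≤ M := by
    refine (wlen_le S _ fun x hx => l1 x (List.mem_of_mem_take hx)).trans ?_
    simp
  have hm2 : wlen S (m⁻¹ * z) + M ≤ wlen S z := by
    rw [hmz]
    have := wlen_le S (l.drop M) fun x hx => l1 x (List.mem_of_mem_drop hx)
    rw [List.length_drop, l3] at this
    omega
  have hmaps : ∀ i ∈ Finset.range (B.card + 1), m⁻¹ * g ^ i * m ∈ B := by
    intro i hi
    have hMi : wlen S (g ^ i) ≤ M := Finset.le_sup (f := fun i => wlen S (g ^ i)) hi
    have := key_bound S hS δ hδ hd z (g ^ i) m (hzc.pow_right i) M hMi hcon.le hm1 hm2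
      (by
        have := hk (k + i)
        rwa [zpow_add, ← mul_assoc, zpow_natCast] at this)
      (by
        have := hk (k - i)
        rwa [zpow_sub, ← mul_assoc, zpow_natCast] at this)
    rw [hB, Set.Finite.mem_toFinset]
    exact_mod_cast this.trans hK
  obtain ⟨i, -, j, -, hij, he⟩ := Finset.exists_ne_map_eq_of_card_lt_of_maps_to
    (by simp) hmaps
  have he' : g ^ i = g ^ j := by simpa using he
  refine hg (i - j) (by omega) ?_
  rw [zpow_sub, zpow_natCast, zpow_natCast, he', mul_inv_cancel]

/-- A non-torsion, non-elementary hyperbolic group has finite center. -/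
theorem stmt_9 {G : Type*} [Group G] (hG : IsHyperbolicGroup G)
    (hnt : ∃ g : G, ∀ n : ℤ, n ≠ 0 → g ^ n ≠ 1)
    (hne : ¬ ∃ H : Subgroup G, H.FiniteIndex ∧ IsCyclic H) :
    (Subgroup.center G : Set G).Finite := by
  obtain ⟨S, hf, hS, δ, hδ, hd⟩ := hG
  obtain ⟨g, hg⟩ := hnt
  by_contra hinf
  apply hne
  obtain ⟨C, hC⟩ := coset_bound S hf hS δ hδ hd g hg
  have hcen : ∀ z ∈ (Subgroup.center G : Set G), ∃ k : ℤ, wlen S (z * g ^ k) ≤ C :=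
    fun z hz => hC z (Subgroup.mem_center_iff.1 hz g).symm
  choose! k hk using hcen
  obtain ⟨z1, hz1, z2, hz2, hne12, he⟩ := Set.Infinite.exists_ne_map_eq_of_mapsTo
    (f := fun z => z * g ^ k z) hinf (t := {x : G | wlen S x ≤ C}) (fun z hz => hk z hz) (ball_finite S hf hS C)
  set n : ℤ := k z1 - k z2 with hn
  have hgn : g ^ n = z1⁻¹ * z2 := by
    rw [hn, zpow_sub, eq_inv_mul_iff_mul_eq, ← mul_assoc, he, mul_inv_cancel_right]
  have hgc : g ^ n ∈ Subgroup.center G := by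
    rw [hgn]; exact mul_mem (inv_mem hz1) hz2
  have hn0 : n ≠ 0 := by
    intro h0
    rw [h0, zpow_zero, eq_comm, inv_mul_eq_one] at hgn
    exact hne12 hgn
  obtain ⟨C', hC'⟩ := coset_bound S hf hS δ hδ hd (g ^ n) (fun j hj => by
    rw [← zpow_mul]; exact hg _ (mul_ne_zero hn0 hj))
  refine ⟨Subgroup.zpowers (g ^ n), ?_, inferInstance⟩
  have hfin : Finite (G ⧸ Subgroup.zpowers (g ^ n)) := by
    have hb := (ball_finite S hf hS C').image
      (fun x : G => (x : G ⧸ Subgroup.zpowers (g ^ n)))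
    refine Set.finite_univ_iff.1 (hb.subset ?_)
    intro q _
    obtain ⟨x, rfl⟩ := QuotientGroup.mk_surjective q
    obtain ⟨j, hj⟩ := hC' x (Subgroup.mem_center_iff.1 hgc x)
    refine ⟨_, hj, ?_⟩
    refine QuotientGroup.eq.2 ?_
    refine ⟨-j, ?_⟩
    simp
  exact Subgroup.finiteIndex_of_finite_quotient
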